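/- Fix d ≥ 2 and let V be the maximum of the components of a Dir_k(1/(d−1))-distributed random vector, where k ∈ {d, d+1}. Then E[(1 − V)^{−1/2}] ≤ 7√2. -/

import Mathlib

open MeasureTheory ProbabilityTheory

/-- The law of the first `m` coordinates of a `Dir_{m+1}(α)`-distributed
vector: the density `Γ((m+1)α)/Γ(α)^{m+1} · (∏ y_i^{α-1}) (1-∑ y_i)^{α-1}` on
`{y : y_i > 0, ∑ y_i < 1} ⊆ ℝ^m`. -/
noncomputable def dirichletCoordLaw (m : ℕ) (α : ℝ) : Measure (Fin m → ℝ) :=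
  volume.withDensity (fun y => ENNReal.ofReal
    (if (∀ i, 0 < y i) ∧ ∑ i, y i < 1 then
      (Real.Gamma (((m : ℝ) + 1) * α) / Real.Gamma α ^ (m + 1)) *
        (∏ i, y i ^ (α - 1)) * (1 - ∑ i, y i) ^ (α - 1)
    else 0))

/-! For a monotone `g`, `g (max_i X_i)` is at most `g (1/2)` plus the sum of the `g (X_i)` over
those `i` with `X_i > 1/2`, so only the marginals of the Dirichlet law matter. Splitting off one
coordinate `t` and rescaling the others by `1 - t` (stick-breaking) shows that each of the first `m`
marginals is `Beta(α, mα)`; the reflection exchanging a coordinate with the last one preserves the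
law, so the last marginal is the same. For `1 ≤ mα` the density of `Beta(α, mα)` with respect to
`Beta(α, 1)` is antitone, so by Chebyshev's association inequality `Beta(α, 1)` gives larger
integrals of monotone functions, and its density `α t ^ (α - 1)` is at most `2α` on `(1/2, 1)`. -/

open scoped ENNReal

section Association

lemma mul_add_mul_le_mul_add_mul_of_canonicallyOrderedAdd {R : Type*} [CommSemiring R]
    [PartialOrder R] [CanonicallyOrderedAdd R] {a b c d : R} (hab : a ≤ b) (hcd : c ≤ d) :
    a * d + b * c ≤ a * c + b * d := by
  obtain ⟨e, rfl⟩ := exists_add_of_le hab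
  obtain ⟨k, rfl⟩ := exists_add_of_le hcd
  calc a * (c + k) + (a + e) * c ≤ a * (c + k) + (a + e) * c + e * k := le_self_add
    _ = a * c + (a + e) * (c + k) := by ring

lemma mul_add_mul_le_mul_add_mul_of_antivary {ι R : Type*} [CommSemiring R] [LinearOrder R]
    [CanonicallyOrderedAdd R] {f g : ι → R} (h : Antivary f g) (s t : ι) :
    f s * g s + f t * g t ≤ f s * g t + f t * g s := by
  rcases lt_trichotomy (g s) (g t) with hst | hst | hst
  · simpa only [add_comm] using mul_add_mul_le_mul_add_mul_of_canonicallyOrderedAdd (h hst) hst.le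
  · rw [hst]
  · exact mul_add_mul_le_mul_add_mul_of_canonicallyOrderedAdd (h hst) hst.le

variable {Ω : Type*} [MeasurableSpace Ω] {μ : Measure Ω} {f g : Ω → ℝ≥0∞}

lemma measure_univ_mul_lintegral_mul_le_of_antivary (hf : AEMeasurable f μ)
    (hg : AEMeasurable g μ) (h : Antivary f g) :
    μ Set.univ * ∫⁻ t, f t * g t ∂μ ≤ (∫⁻ t, f t ∂μ) * ∫⁻ t, g t ∂μ := by
  suffices 2 * (μ Set.univ * ∫⁻ t, f t * g t ∂μ) ≤ 2 * ((∫⁻ t, f t ∂μ) * ∫⁻ t, g t ∂μ) from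
    (ENNReal.mul_le_mul_iff_right two_ne_zero ENNReal.ofNat_ne_top).1 this
  calc 2 * (μ Set.univ * ∫⁻ t, f t * g t ∂μ)
      = ∫⁻ s, ∫⁻ t, (f s * g s + f t * g t) ∂μ ∂μ := by
        simp_rw [lintegral_add_left measurable_const, lintegral_const]
        rw [lintegral_add_right _ measurable_const, lintegral_const,
          lintegral_mul_const'' (f := fun s => f s * g s) _ (hf.mul hg)]
        ring
    _ ≤ ∫⁻ s, ∫⁻ t, (f s * g t + f t * g s) ∂μ ∂μ :=
        lintegral_mono fun s => lintegral_mono fun t => mul_add_mul_le_mul_add_mul_of_antivary h s t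
    _ = 2 * ((∫⁻ t, f t ∂μ) * ∫⁻ t, g t ∂μ) := by
        simp_rw [lintegral_add_left' (hg.const_mul _), lintegral_const_mul'' _ hg,
          lintegral_mul_const'' _ hf]
        rw [lintegral_add_left' (hf.mul_const _), lintegral_mul_const'' _ hf,
          lintegral_const_mul'' _ hg]
        ring

lemma lintegral_withDensity_le_of_antivary [IsProbabilityMeasure μ]
    [IsProbabilityMeasure (μ.withDensity g)] (hf : AEMeasurable f μ) (hg : AEMeasurable g μ)
    (h : Antivary f g) : ∫⁻ t, f t ∂μ.withDensity g ≤ ∫⁻ t, f t ∂μ := by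
  have hmass : ∫⁻ t, g t ∂μ = 1 := by
    rw [← setLIntegral_univ, ← withDensity_apply _ MeasurableSet.univ, measure_univ]
  calc ∫⁻ t, f t ∂μ.withDensity g = μ Set.univ * ∫⁻ t, f t * g t ∂μ := by
        rw [lintegral_withDensity_eq_lintegral_mul₀ hg hf, measure_univ, one_mul]
        simp only [Pi.mul_apply, mul_comm]
    _ ≤ (∫⁻ t, f t ∂μ) * ∫⁻ t, g t ∂μ := measure_univ_mul_lintegral_mul_le_of_antivary hf hg h
    _ = ∫⁻ t, f t ∂μ := by rw [hmass, mul_one]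

end Association

section Beta

@[fun_prop]
lemma measurable_betaPDF (α β : ℝ) : Measurable (betaPDF α β) :=
  (measurable_betaPDFReal α β).ennreal_ofReal

lemma betaMeasure_eq_withDensity_betaMeasure {α β γ : ℝ} (hα : 0 < α) (hβ : 0 < β) (h : β ≤ γ) :
    betaMeasure α γ = (betaMeasure α β).withDensity fun t =>
      ENNReal.ofReal (beta α β / beta α γ) * ENNReal.ofReal (1 - t) ^ (γ - β) := by
  rw [betaMeasure, betaMeasure, ← withDensity_mul _ (measurable_betaPDF α β) (by fun_prop)]
  congr 1
  ext t
  rw [Pi.mul_apply]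
  rcases le_or_gt t 0 with h0 | h0
  · simp [betaPDF_eq_zero_of_nonpos h0]
  rcases le_or_gt 1 t with h1 | h1
  · simp [betaPDF_eq_zero_of_one_le h1]
  have hr : 0 < 1 - t := sub_pos.2 h1
  have hB := beta_pos hα hβ
  have hB' := beta_pos hα (hβ.trans_le h)
  rw [betaPDF_of_pos_lt_one h0 h1, betaPDF_of_pos_lt_one h0 h1, ENNReal.ofReal_rpow_of_pos hr,
    ← ENNReal.ofReal_mul (by positivity), ← ENNReal.ofReal_mul (by positivity),
    show γ - 1 = (β - 1) + (γ - β) by ring, Real.rpow_add hr]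
  congr 1
  field_simp

lemma lintegral_betaMeasure_anti_right {α β γ : ℝ} (hα : 0 < α) (hβ : 0 < β) (h : β ≤ γ)
    {f : ℝ → ℝ≥0∞} (hf : Monotone f) :
    ∫⁻ t, f t ∂betaMeasure α γ ≤ ∫⁻ t, f t ∂betaMeasure α β := by
  have hγ := isProbabilityMeasureBeta hα (hβ.trans_le h)
  have := isProbabilityMeasureBeta hα hβ
  have hdensity : Antitone fun t : ℝ =>
      ENNReal.ofReal (beta α β / beta α γ) * ENNReal.ofReal (1 - t) ^ (γ - β) := by
    intro s t hst
    dsimp only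
    gcongr
  rw [betaMeasure_eq_withDensity_betaMeasure hα hβ h] at hγ ⊢
  exact lintegral_withDensity_le_of_antivary hf.measurable.aemeasurable
    hdensity.measurable.aemeasurable (hf.antivary hdensity)

lemma monotone_indicator_of_isUpperSet {ι M : Type*} [Preorder ι] [AddCommMonoid M]
    [PartialOrder M] [CanonicallyOrderedAdd M] {g : ι → M} (hg : Monotone g) {s : Set ι}
    (hs : IsUpperSet s) : Monotone (s.indicator g) := by
  intro x y hxy
  by_cases hx : x ∈ s
  · rw [Set.indicator_of_mem hx, Set.indicator_of_mem (hs hxy hx)]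
    exact hg hxy
  · rw [Set.indicator_of_notMem hx]
    exact zero_le

lemma setLIntegral_Ioi_betaMeasure_anti_right {α β γ : ℝ} (hα : 0 < α) (hβ : 0 < β) (h : β ≤ γ)
    {f : ℝ → ℝ≥0∞} (hf : Monotone f) (a : ℝ) :
    ∫⁻ t in Set.Ioi a, f t ∂betaMeasure α γ ≤ ∫⁻ t in Set.Ioi a, f t ∂betaMeasure α β := by
  simp only [← lintegral_indicator measurableSet_Ioi]
  exact lintegral_betaMeasure_anti_right hα hβ h
    (monotone_indicator_of_isUpperSet hf (isUpperSet_Ioi a))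

lemma beta_one_right {α : ℝ} (hα : 0 < α) : beta α 1 = 1 / α := by
  have := (Real.Gamma_pos_of_pos hα).ne'
  rw [beta, Real.Gamma_one, Real.Gamma_add_one hα.ne']
  field_simp

lemma betaPDF_one_right_le {α t : ℝ} (hα : 0 < α) (ht : 0 < t) :
    betaPDF α 1 t ≤ ENNReal.ofReal (α / t) := by
  rcases le_or_gt 1 t with h1 | h1
  · simp [betaPDF_eq_zero_of_one_le h1]
  rw [betaPDF_of_pos_lt_one ht h1, beta_one_right hα, one_div_one_div, sub_self, Real.rpow_zero,
    mul_one, div_eq_mul_inv, ← Real.rpow_neg_one]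
  gcongr ENNReal.ofReal (α * ?_)
  exact Real.rpow_le_rpow_of_exponent_ge ht h1.le (by linarith)

lemma monotone_ofReal_one_sub_rpow_neg {s : ℝ} (hs : 0 ≤ s) :
    Monotone fun t : ℝ => ENNReal.ofReal (1 - t) ^ (-s) := by
  intro t u htu
  simp only [ENNReal.rpow_neg]
  gcongr

lemma setLIntegral_Ioo_one_sub_rpow_neg {a s : ℝ} (ha : a ≤ 1) (hs : s < 1) :
    ∫⁻ t in Set.Ioo a 1, ENNReal.ofReal (1 - t) ^ (-s) =
      ENNReal.ofReal ((1 - a) ^ (1 - s) / (1 - s)) := by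
  have hint : IntervalIntegrable (fun t : ℝ => (1 - t) ^ (-s)) volume a 1 := by
    simpa only [sub_sub_cancel, sub_zero] using
      (intervalIntegral.intervalIntegrable_rpow' (a := 1 - a) (b := 0)
        (neg_lt_neg hs)).comp_sub_left 1
  have hval : ∫ t in a..1, (1 - t) ^ (-s) = (1 - a) ^ (1 - s) / (1 - s) := by
    rw [intervalIntegral.integral_comp_sub_left (fun t : ℝ => t ^ (-s)),
      integral_rpow (Or.inl (neg_lt_neg hs)), sub_self, neg_add_eq_sub,
      Real.zero_rpow (sub_pos.2 hs).ne', sub_zero]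
  rw [← hval, intervalIntegral.integral_of_le ha, ← restrict_Ioo_eq_restrict_Ioc,
    ofReal_integral_eq_lintegral_ofReal]
  · exact setLIntegral_congr_fun measurableSet_Ioo fun t ht =>
      ENNReal.ofReal_rpow_of_pos (sub_pos.2 ht.2)
  · rwa [← IntegrableOn, ← intervalIntegrable_iff_integrableOn_Ioo_of_le ha]
  · filter_upwards [ae_restrict_mem measurableSet_Ioo] with t ht
    exact Real.rpow_nonneg (sub_pos.2 ht.2).le _

lemma setLIntegral_Ioi_one_sub_rpow_neg_betaMeasure_one_le {α a s : ℝ} (hα : 0 < α) (ha0 : 0 < a)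
    (ha1 : a ≤ 1) (hs : s < 1) :
    ∫⁻ t in Set.Ioi a, ENNReal.ofReal (1 - t) ^ (-s) ∂betaMeasure α 1 ≤
      ENNReal.ofReal (α / a * ((1 - a) ^ (1 - s) / (1 - s))) := by
  have hpointwise : ∀ t ∈ Set.Ioi a, betaPDF α 1 t * ENNReal.ofReal (1 - t) ^ (-s) ≤
      (Set.Iio 1).indicator
        (fun t => ENNReal.ofReal (α / a) * ENNReal.ofReal (1 - t) ^ (-s)) t := by
    intro t (ht : a < t)
    rcases lt_or_ge t 1 with h1 | h1
    · rw [Set.indicator_of_mem (Set.mem_Iio.2 h1)]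
      gcongr
      exact (betaPDF_one_right_le hα (ha0.trans ht)).trans (by gcongr)
    · rw [betaPDF_eq_zero_of_one_le h1, zero_mul]
      exact zero_le
  calc ∫⁻ t in Set.Ioi a, ENNReal.ofReal (1 - t) ^ (-s) ∂betaMeasure α 1
      = ∫⁻ t in Set.Ioi a, betaPDF α 1 t * ENNReal.ofReal (1 - t) ^ (-s) := by
        rw [betaMeasure, setLIntegral_withDensity_eq_setLIntegral_mul _ (measurable_betaPDF α 1)
          (by fun_prop) measurableSet_Ioi]
        rfl
    _ ≤ ∫⁻ t in Set.Ioi a, (Set.Iio 1).indicator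
          (fun t => ENNReal.ofReal (α / a) * ENNReal.ofReal (1 - t) ^ (-s)) t :=
        setLIntegral_mono' measurableSet_Ioi hpointwise
    _ = ENNReal.ofReal (α / a) * ∫⁻ t in Set.Ioo a 1, ENNReal.ofReal (1 - t) ^ (-s) := by
        rw [setLIntegral_indicator measurableSet_Iio, Set.Iio_inter_Ioi,
          lintegral_const_mul _ (by fun_prop)]
    _ = ENNReal.ofReal (α / a * ((1 - a) ^ (1 - s) / (1 - s))) := by
        rw [setLIntegral_Ioo_one_sub_rpow_neg ha1 hs, ← ENNReal.ofReal_mul (by positivity)]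

lemma setLIntegral_Ioi_one_sub_rpow_neg_betaMeasure_le {α β a s : ℝ} (hα : 0 < α) (hβ : 1 ≤ β)
    (ha0 : 0 < a) (ha1 : a ≤ 1) (hs0 : 0 ≤ s) (hs1 : s < 1) :
    ∫⁻ t in Set.Ioi a, ENNReal.ofReal (1 - t) ^ (-s) ∂betaMeasure α β ≤
      ENNReal.ofReal (α / a * ((1 - a) ^ (1 - s) / (1 - s))) :=
  (setLIntegral_Ioi_betaMeasure_anti_right hα one_pos hβ (monotone_ofReal_one_sub_rpow_neg hs0)
    a).trans (setLIntegral_Ioi_one_sub_rpow_neg_betaMeasure_one_le hα ha0 ha1 hs1)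

end Beta

section Maximum

variable {ι : Type*} [Fintype ι] [Nonempty ι] {g : ℝ → ℝ≥0∞}

lemma apply_iSup_le_add_sum_indicator_Ioi (hg : Monotone g) (a : ℝ) (x : ι → ℝ) :
    g (⨆ i, x i) ≤ g a + ∑ i, (Set.Ioi a).indicator g (x i) := by
  obtain ⟨i, hi⟩ := exists_eq_ciSup_of_finite (f := x)
  rw [← hi]
  rcases le_or_gt (x i) a with h | h
  · exact (hg h).trans le_self_add
  · rw [← Set.indicator_of_mem (Set.mem_Ioi.2 h) g]
    exact (Finset.single_le_sum (f := fun j => (Set.Ioi a).indicator g (x j))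
      (fun _ _ => zero_le) (Finset.mem_univ i)).trans le_add_self

lemma lintegral_apply_iSup_le {μ : Measure (ι → ℝ)} [IsProbabilityMeasure μ] {ν : Measure ℝ}
    (hν : ∀ i, μ.map (fun x => x i) = ν) (hg : Monotone g) (a : ℝ) :
    ∫⁻ x, g (⨆ i, x i) ∂μ ≤ g a + Fintype.card ι * ∫⁻ t in Set.Ioi a, g t ∂ν := by
  have hmeas : Measurable ((Set.Ioi a).indicator g) := hg.measurable.indicator measurableSet_Ioi
  calc ∫⁻ x, g (⨆ i, x i) ∂μ
      ≤ ∫⁻ x, (g a + ∑ i, (Set.Ioi a).indicator g (x i)) ∂μ :=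
        lintegral_mono fun x => apply_iSup_le_add_sum_indicator_Ioi hg a x
    _ = g a + ∑ i, ∫⁻ x, (Set.Ioi a).indicator g (x i) ∂μ := by
        rw [lintegral_add_left measurable_const, lintegral_const, measure_univ, mul_one,
          lintegral_finsetSum _ (by fun_prop)]
    _ = g a + ∑ _i : ι, ∫⁻ t in Set.Ioi a, g t ∂ν := by
        congr! 2 with i
        rw [← lintegral_indicator measurableSet_Ioi, ← hν i,
          lintegral_map hmeas (measurable_pi_apply i)]
    _ = g a + Fintype.card ι * ∫⁻ t in Set.Ioi a, g t ∂ν := by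
        rw [Finset.sum_const, Finset.card_univ, nsmul_eq_mul]

end Maximum

section Dirichlet

variable {n : ℕ} {α : ℝ}

/-- The normalizing constant `Γ((m+1)α) / Γ(α)^(m+1)` of the density of `Dir_{m+1}(α)`. -/
noncomputable def dirichletConst (m : ℕ) (α : ℝ) : ℝ :=
  Real.Gamma (((m : ℝ) + 1) * α) / Real.Gamma α ^ (m + 1)

/-- The density of `dirichletCoordLaw m α` with respect to Lebesgue measure. -/
noncomputable def dirichletPDF (m : ℕ) (α : ℝ) (y : Fin m → ℝ) : ℝ≥0∞ :=
  ENNReal.ofReal (if (∀ i, 0 < y i) ∧ ∑ i, y i < 1 then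
    dirichletConst m α * (∏ i, y i ^ (α - 1)) * (1 - ∑ i, y i) ^ (α - 1) else 0)

/-- The symmetric Dirichlet distribution `Dir_{m+1}(α)` on all `m + 1` coordinates: the last one is
`1` minus the sum of the others. -/
noncomputable def dirichletMeasure (m : ℕ) (α : ℝ) : Measure (Fin (m + 1) → ℝ) :=
  (dirichletCoordLaw m α).map fun y => Fin.snoc (α := fun _ => ℝ) y (1 - ∑ i, y i)

lemma dirichletCoordLaw_eq_withDensity (m : ℕ) (α : ℝ) :
    dirichletCoordLaw m α = volume.withDensity (dirichletPDF m α) := rfl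

@[fun_prop]
lemma measurable_dirichletPDF (m : ℕ) (α : ℝ) : Measurable (dirichletPDF m α) := by
  unfold dirichletPDF
  refine ENNReal.measurable_ofReal.comp (Measurable.ite ?_ (by fun_prop) measurable_const)
  have hpos : MeasurableSet {y : Fin m → ℝ | ∀ i, 0 < y i} := by
    simp only [Set.ofPred_forall]
    exact MeasurableSet.iInter fun i => measurableSet_lt measurable_const (measurable_pi_apply i)
  have hsum : MeasurableSet {y : Fin m → ℝ | ∑ i, y i < 1} :=
    measurableSet_lt (by fun_prop) measurable_const
  exact hpos.inter hsum

lemma lintegral_dirichletCoordLaw (m : ℕ) (α : ℝ) {φ : (Fin m → ℝ) → ℝ≥0∞} (hφ : Measurable φ) :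
    ∫⁻ y, φ y ∂dirichletCoordLaw m α = ∫⁻ y, φ y * dirichletPDF m α y := by
  rw [dirichletCoordLaw_eq_withDensity,
    lintegral_withDensity_eq_lintegral_mul _ (by fun_prop) hφ]
  simp only [Pi.mul_apply, mul_comm]

lemma dirichletConst_succ (hα : 0 < α) :
    dirichletConst (n + 1) α = 1 / beta α (((n : ℝ) + 1) * α) * dirichletConst n α := by
  have hΓα := (Real.Gamma_pos_of_pos hα).ne'
  rw [dirichletConst, dirichletConst, beta,
    show (((n + 1 : ℕ) : ℝ) + 1) * α = α + ((n : ℝ) + 1) * α by push_cast; ring]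
  field_simp
  ring

lemma dirichletPDF_insertNth (i : Fin (n + 1)) (t : ℝ) (w : Fin n → ℝ) :
    dirichletPDF (n + 1) α (i.insertNth t w) =
      ENNReal.ofReal (if (0 < t ∧ ∀ j, 0 < w j) ∧ t + ∑ j, w j < 1 then
        dirichletConst (n + 1) α * (t ^ (α - 1) * ∏ j, w j ^ (α - 1)) *
          (1 - (t + ∑ j, w j)) ^ (α - 1) else 0) := by
  simp [dirichletPDF, Fin.sum_univ_succAbove _ i, Fin.prod_univ_succAbove _ i,
    Fin.forall_iff_succAbove i]

lemma dirichletPDF_insertNth_of_notMem_Ioo (i : Fin (n + 1)) {t : ℝ} (ht : t ∉ Set.Ioo 0 1)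
    (w : Fin n → ℝ) : dirichletPDF (n + 1) α (i.insertNth t w) = 0 := by
  rw [dirichletPDF_insertNth, if_neg, ENNReal.ofReal_zero]
  rintro ⟨⟨ht0, hw⟩, hsum⟩
  have := Finset.sum_nonneg fun j (_ : j ∈ Finset.univ) => (hw j).le
  exact ht ⟨ht0, by linarith⟩

lemma dirichletPDF_insertNth_one_sub_sum_sub (i : Fin (n + 1)) (t : ℝ) (w : Fin n → ℝ) :
    dirichletPDF (n + 1) α (i.insertNth (1 - ∑ j, w j - t) w) =
      dirichletPDF (n + 1) α (i.insertNth t w) := by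
  have hlast : 1 - (1 - ∑ j, w j - t + ∑ j, w j) = t := by ring
  have hcoord : 1 - ∑ j, w j - t = 1 - (t + ∑ j, w j) := by ring
  rw [dirichletPDF_insertNth, dirichletPDF_insertNth, hlast, hcoord]
  congr 1
  refine if_congr ⟨?_, ?_⟩ (by ring) rfl <;>
  · rintro ⟨⟨ht, hw⟩, hsum⟩
    exact ⟨⟨by linarith, hw⟩, by linarith⟩

lemma forall_pos_and_sum_lt_one_scale_iff {t : ℝ} (ht : t ∈ Set.Ioo 0 1) (u : Fin n → ℝ) :
    ((0 < t ∧ ∀ j, 0 < (1 - t) * u j) ∧ t + ∑ j, (1 - t) * u j < 1) ↔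
      (∀ j, 0 < u j) ∧ ∑ j, u j < 1 := by
  have hr : 0 < 1 - t := sub_pos.2 ht.2
  rw [← Finset.mul_sum, ← lt_sub_iff_add_lt', mul_lt_iff_lt_one_right hr]
  simp only [ht.1, true_and, mul_pos_iff_of_pos_left hr]

lemma prod_mul_rpow {r : ℝ} (hr : 0 ≤ r) {u : Fin n → ℝ} (hu : ∀ j, 0 ≤ u j) (p : ℝ) :
    ∏ j, (r * u j) ^ p = (r ^ p) ^ n * ∏ j, u j ^ p := by
  simp_rw [Real.mul_rpow hr (hu _)]
  rw [Finset.prod_mul_distrib, Finset.prod_const, Finset.card_univ, Fintype.card_fin]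

lemma dirichletPDF_insertNth_smul (hα : 0 < α) (i : Fin (n + 1)) {t : ℝ}
    (ht : t ∈ Set.Ioo 0 1) (u : Fin n → ℝ) :
    ENNReal.ofReal ((1 - t) ^ n) * dirichletPDF (n + 1) α (i.insertNth t ((1 - t) • u)) =
      betaPDF α (((n : ℝ) + 1) * α) t * dirichletPDF n α u := by
  have hr : 0 < 1 - t := sub_pos.2 ht.2
  have hB : 0 < beta α (((n : ℝ) + 1) * α) := beta_pos hα (by positivity)
  have ht0 := ht.1
  rw [dirichletPDF_insertNth, dirichletPDF, betaPDF_of_pos_lt_one ht.1 ht.2,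
    ← ENNReal.ofReal_mul (by positivity), ← ENNReal.ofReal_mul (by positivity)]
  simp only [Pi.smul_apply, smul_eq_mul, forall_pos_and_sum_lt_one_scale_iff ht]
  congr 1
  split_ifs with hu
  · have hlast : 1 - (t + ∑ j, (1 - t) * u j) = (1 - t) * (1 - ∑ j, u j) := by
      rw [← Finset.mul_sum]
      ring
    have hexp : (1 - t) ^ (((n : ℝ) + 1) * α - 1) =
        (1 - t) ^ n * ((1 - t) ^ (α - 1)) ^ (n + 1) := by
      rw [← Real.rpow_natCast _ (n + 1), ← Real.rpow_mul hr.le, ← Real.rpow_natCast,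
        ← Real.rpow_add hr]
      congr 1
      push_cast
      ring
    rw [hlast, Real.mul_rpow hr.le (sub_nonneg.2 hu.2.le),
      prod_mul_rpow hr.le (fun j => (hu.1 j).le), hexp, dirichletConst_succ hα]
    ring
  · rw [mul_zero, mul_zero]

lemma lintegral_eq_ofReal_pow_mul_lintegral_smul {φ : (Fin n → ℝ) → ℝ≥0∞} (hφ : Measurable φ)
    {r : ℝ} (hr : 0 < r) :
    ∫⁻ w, φ w = ENNReal.ofReal (r ^ n) * ∫⁻ u, φ (r • u) := by
  rw [← lintegral_map hφ (measurable_const_smul r), Measure.map_addHaar_smul _ hr.ne',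
    lintegral_smul_measure, smul_eq_mul, ← mul_assoc, ← ENNReal.ofReal_mul (by positivity),
    Module.finrank_fin_fun, abs_of_pos (by positivity), mul_inv_cancel₀ (by positivity),
    ENNReal.ofReal_one, one_mul]

lemma lintegral_eq_lintegral_prod_insertNth (i : Fin (n + 1)) (φ : (Fin (n + 1) → ℝ) → ℝ≥0∞) :
    ∫⁻ y, φ y = ∫⁻ p : ℝ × (Fin n → ℝ), φ (i.insertNth p.1 p.2) :=
  ((volume_preserving_piFinSuccAbove (fun _ => ℝ) i).symm.lintegral_comp_emb
    (MeasurableEquiv.measurableEmbedding _) φ).symm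

@[fun_prop]
lemma measurable_insertNth (i : Fin (n + 1)) :
    Measurable fun p : ℝ × (Fin n → ℝ) => (i.insertNth p.1 p.2 : Fin (n + 1) → ℝ) :=
  (MeasurableEquiv.piFinSuccAbove (fun _ => ℝ) i).symm.measurable

lemma measurable_dirichletPDF_insertNth (i : Fin (n + 1)) (t : ℝ) :
    Measurable fun w : Fin n → ℝ => dirichletPDF (n + 1) α (i.insertNth t w) :=
  (measurable_dirichletPDF _ _).comp ((measurable_insertNth i).comp measurable_prodMk_left)

lemma lintegral_dirichletPDF_insertNth (hα : 0 < α) (i : Fin (n + 1)) (t : ℝ) :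
    ∫⁻ w, dirichletPDF (n + 1) α (i.insertNth t w) =
      betaPDF α (((n : ℝ) + 1) * α) t * dirichletCoordLaw n α Set.univ := by
  have hmass : dirichletCoordLaw n α Set.univ = ∫⁻ u, dirichletPDF n α u := by
    rw [dirichletCoordLaw_eq_withDensity, withDensity_apply _ MeasurableSet.univ, setLIntegral_univ]
  by_cases ht : t ∈ Set.Ioo 0 1
  · rw [lintegral_eq_ofReal_pow_mul_lintegral_smul (measurable_dirichletPDF_insertNth i t)
        (sub_pos.2 ht.2),
      ← lintegral_const_mul' _ _ ENNReal.ofReal_ne_top]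
    simp only [dirichletPDF_insertNth_smul hα i ht]
    rw [lintegral_const_mul _ (by fun_prop), hmass]
  · simp only [dirichletPDF_insertNth_of_notMem_Ioo i ht, lintegral_zero]
    rw [betaPDF_eq, if_neg (by exact ht), ENNReal.ofReal_zero, zero_mul]

lemma map_eval_dirichletCoordLaw_succ (hα : 0 < α) (i : Fin (n + 1)) :
    (dirichletCoordLaw (n + 1) α).map (fun y => y i) =
      dirichletCoordLaw n α Set.univ • betaMeasure α (((n : ℝ) + 1) * α) := by
  refine Measure.ext_of_lintegral _ fun F hF => ?_
  rw [lintegral_map hF (by fun_prop), lintegral_dirichletCoordLaw _ _ (by fun_prop),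
    lintegral_eq_lintegral_prod_insertNth i, Measure.volume_eq_prod, lintegral_prod _ (by fun_prop),
    lintegral_smul_measure, betaMeasure, lintegral_withDensity_eq_lintegral_mul _ (by fun_prop) hF,
    smul_eq_mul, ← lintegral_const_mul _ (by fun_prop)]
  refine lintegral_congr fun t => ?_
  simp only [Fin.insertNth_apply_same, Pi.mul_apply]
  rw [lintegral_const_mul _ (measurable_dirichletPDF_insertNth i t),
    lintegral_dirichletPDF_insertNth hα i]
  ring

lemma isProbabilityMeasure_dirichletCoordLaw (hα : 0 < α) :
    ∀ m, IsProbabilityMeasure (dirichletCoordLaw m α)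
  | 0 => by
    have hΓ := (Real.Gamma_pos_of_pos hα).ne'
    constructor
    rw [dirichletCoordLaw_eq_withDensity, withDensity_apply _ MeasurableSet.univ,
      Measure.restrict_univ, volume_pi, Measure.pi_of_empty, lintegral_dirac]
    simp [dirichletPDF, dirichletConst, hΓ]
  | n + 1 => by
    have := isProbabilityMeasure_dirichletCoordLaw hα n
    have := isProbabilityMeasureBeta hα (show 0 < ((n : ℝ) + 1) * α by positivity)
    refine (Measure.isProbabilityMeasure_map_iff (measurable_pi_apply 0).aemeasurable).1 ?_
    rwa [map_eval_dirichletCoordLaw_succ hα 0, measure_univ, one_smul]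

lemma map_eval_dirichletCoordLaw (hα : 0 < α) {m : ℕ} (i : Fin m) :
    (dirichletCoordLaw m α).map (fun y => y i) = betaMeasure α (m * α) := by
  obtain ⟨n, rfl⟩ : ∃ n, m = n + 1 := ⟨m - 1, by have := i.pos; omega⟩
  have := isProbabilityMeasure_dirichletCoordLaw hα n
  rw [map_eval_dirichletCoordLaw_succ hα, measure_univ, one_smul, Nat.cast_succ]

lemma map_one_sub_sum_dirichletCoordLaw {m : ℕ} (i : Fin m) :
    (dirichletCoordLaw m α).map (fun y => 1 - ∑ j, y j) =
      (dirichletCoordLaw m α).map fun y => y i := by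
  obtain ⟨n, rfl⟩ : ∃ n, m = n + 1 := ⟨m - 1, by have := i.pos; omega⟩
  refine Measure.ext_of_lintegral _ fun F hF => ?_
  rw [lintegral_map hF (by fun_prop), lintegral_map hF (by fun_prop),
    lintegral_dirichletCoordLaw _ _ (by fun_prop), lintegral_dirichletCoordLaw _ _ (by fun_prop),
    lintegral_eq_lintegral_prod_insertNth i, lintegral_eq_lintegral_prod_insertNth i,
    Measure.volume_eq_prod, lintegral_prod_symm _ (by fun_prop),
    lintegral_prod_symm _ (by fun_prop)]
  refine lintegral_congr fun w => ?_
  rw [← lintegral_sub_left_eq_self _ (1 - ∑ j, w j)]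
  refine lintegral_congr fun t => ?_
  have hlast : 1 - (1 - ∑ j, w j - t + ∑ j, w j) = t := by ring
  simp [dirichletPDF_insertNth_one_sub_sum_sub, Fin.sum_univ_succAbove _ i, hlast]

lemma measurable_snoc_one_sub_sum (m : ℕ) :
    Measurable fun y : Fin m → ℝ =>
      (Fin.snoc (α := fun _ => ℝ) y (1 - ∑ i, y i) : Fin (m + 1) → ℝ) := by
  refine measurable_pi_iff.2 fun i => ?_
  induction i using Fin.lastCases with
  | last =>
    simp only [Fin.snoc_last]
    fun_prop
  | cast j =>
    simp only [Fin.snoc_castSucc]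
    fun_prop

lemma isProbabilityMeasure_dirichletMeasure (hα : 0 < α) (m : ℕ) :
    IsProbabilityMeasure (dirichletMeasure m α) :=
  have := isProbabilityMeasure_dirichletCoordLaw hα m
  Measure.isProbabilityMeasure_map (measurable_snoc_one_sub_sum m).aemeasurable

lemma map_eval_dirichletMeasure (hα : 0 < α) {m : ℕ} (hm : m ≠ 0) (i : Fin (m + 1)) :
    (dirichletMeasure m α).map (fun x => x i) = betaMeasure α (m * α) := by
  rw [dirichletMeasure, Measure.map_map (measurable_pi_apply i) (measurable_snoc_one_sub_sum m)]
  simp only [Function.comp_def]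
  induction i using Fin.lastCases with
  | last =>
    simp only [Fin.snoc_last]
    rw [map_one_sub_sum_dirichletCoordLaw ⟨0, Nat.pos_of_ne_zero hm⟩,
      map_eval_dirichletCoordLaw hα]
  | cast j =>
    simp only [Fin.snoc_castSucc]
    exact map_eval_dirichletCoordLaw hα j

end Dirichlet

lemma lintegral_one_sub_iSup_rpow_neg_dirichletMeasure_le {m : ℕ} {α s : ℝ} (hs0 : 0 ≤ s)
    (hs1 : s < 1) (hm : 1 ≤ m * α) :
    ∫⁻ x, ENNReal.ofReal (1 - ⨆ i, x i) ^ (-s) ∂dirichletMeasure m α ≤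
      ENNReal.ofReal (2 ^ s * (1 + (m + 1) * α / (1 - s))) := by
  have hα : 0 < α := pos_of_mul_pos_right (one_pos.trans_le hm) m.cast_nonneg
  have hm0 : m ≠ 0 := by
    rintro rfl
    norm_num at hm
  have hs : 0 < 1 - s := sub_pos.2 hs1
  have := isProbabilityMeasure_dirichletMeasure hα m
  have hhalf : ENNReal.ofReal (1 - 1 / 2) ^ (-s) = ENNReal.ofReal (2 ^ s) := by
    rw [show (1 - 1 / 2 : ℝ) = 2⁻¹ by norm_num, ENNReal.ofReal_rpow_of_pos (by norm_num),
      Real.inv_rpow two_pos.le, Real.rpow_neg two_pos.le, inv_inv]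
  have hconst : α / (1 / 2) * ((1 - 1 / 2) ^ (1 - s) / (1 - s)) = 2 ^ s * α / (1 - s) := by
    rw [show (1 - 1 / 2 : ℝ) = 2⁻¹ by norm_num, Real.inv_rpow two_pos.le, Real.rpow_sub two_pos,
      Real.rpow_one]
    field_simp
  have htail := setLIntegral_Ioi_one_sub_rpow_neg_betaMeasure_le hα hm
    (show (0 : ℝ) < 1 / 2 by norm_num) (by norm_num) hs0 hs1
  calc ∫⁻ x, ENNReal.ofReal (1 - ⨆ i, x i) ^ (-s) ∂dirichletMeasure m α
      ≤ ENNReal.ofReal (1 - 1 / 2) ^ (-s) + Fintype.card (Fin (m + 1)) *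
          ∫⁻ t in Set.Ioi (1 / 2), ENNReal.ofReal (1 - t) ^ (-s) ∂betaMeasure α (m * α) :=
        lintegral_apply_iSup_le (map_eval_dirichletMeasure hα hm0)
          (monotone_ofReal_one_sub_rpow_neg hs0) _
    _ ≤ ENNReal.ofReal (2 ^ s) + ENNReal.ofReal (m + 1) *
          ENNReal.ofReal (2 ^ s * α / (1 - s)) := by
        rw [hhalf, Fintype.card_fin, ← Nat.cast_succ, ENNReal.ofReal_natCast, ← hconst]
        gcongr
    _ = ENNReal.ofReal (2 ^ s * (1 + (m + 1) * α / (1 - s))) := by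
        rw [← ENNReal.ofReal_mul (by positivity), ← ENNReal.ofReal_add (by positivity)
          (by positivity)]
        congr 1
        ring

lemma enorm_rpow_neg_le_ofReal_rpow_neg (x : ℝ) {s : ℝ} (hs : 0 ≤ s) :
    ‖x ^ (-s)‖ₑ ≤ ENNReal.ofReal x ^ (-s) := by
  rcases hs.eq_or_lt with rfl | hs
  · simp
  rcases lt_or_ge 0 x with hx | hx
  · rw [ENNReal.ofReal_rpow_of_pos hx, Real.enorm_of_nonneg (by positivity)]
  · rw [ENNReal.ofReal_of_nonpos hx, ENNReal.zero_rpow_of_neg (neg_neg_of_pos hs)]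
    exact le_top

theorem stmt13_general {m : ℕ} {α s : ℝ} (hs0 : 0 ≤ s) (hs1 : s < 1) (hm : 1 ≤ m * α)
    {Ω : Type*} [MeasurableSpace Ω] {μ : Measure Ω} {X : Ω → Fin (m + 1) → ℝ}
    (hlaw : μ.map X = dirichletMeasure m α) :
    Integrable (fun ω => (1 - iSup (X ω)) ^ (-s)) μ ∧
      ∫ ω, (1 - iSup (X ω)) ^ (-s) ∂μ ≤ 2 ^ s * (1 + (m + 1) * α / (1 - s)) := by
  have hα : 0 < α := pos_of_mul_pos_right (one_pos.trans_le hm) m.cast_nonneg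
  have := isProbabilityMeasure_dirichletMeasure hα m
  have hX : AEMeasurable X μ := .of_map_ne_zero (hlaw ▸ IsProbabilityMeasure.ne_zero _)
  have hmax : Measurable fun x : Fin (m + 1) → ℝ => ⨆ i, x i :=
    Measurable.iSup measurable_pi_apply
  have hbound : ∫⁻ ω, ‖(1 - iSup (X ω)) ^ (-s)‖ₑ ∂μ ≤
      ENNReal.ofReal (2 ^ s * (1 + (m + 1) * α / (1 - s))) := by
    calc ∫⁻ ω, ‖(1 - iSup (X ω)) ^ (-s)‖ₑ ∂μ
        ≤ ∫⁻ ω, ENNReal.ofReal (1 - iSup (X ω)) ^ (-s) ∂μ :=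
          lintegral_mono fun ω => enorm_rpow_neg_le_ofReal_rpow_neg _ hs0
      _ = ∫⁻ x, ENNReal.ofReal (1 - ⨆ i, x i) ^ (-s) ∂dirichletMeasure m α := by
          rw [← hlaw, lintegral_map' (by fun_prop) hX]
      _ ≤ _ := lintegral_one_sub_iSup_rpow_neg_dirichletMeasure_le hs0 hs1 hm
  have hint : Integrable (fun ω => (1 - iSup (X ω)) ^ (-s)) μ :=
    ⟨(((hmax.const_sub 1).pow_const (-s)).comp_aemeasurable hX).aestronglyMeasurable,
      hbound.trans_lt ENNReal.ofReal_lt_top⟩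
  refine ⟨hint, (Real.le_norm_self _).trans ?_⟩
  have : 0 < 1 - s := sub_pos.2 hs1
  rw [← ENNReal.ofReal_le_ofReal_iff (by positivity), ofReal_norm]
  exact (enorm_integral_le_lintegral_enorm _).trans hbound

lemma dirichlet_param_bounds {d m : ℕ} (hd : 2 ≤ d) (hk : m + 1 = d ∨ m + 1 = d + 1) :
    1 ≤ (m : ℝ) * (1 / ((d : ℝ) - 1)) ∧ ((m : ℝ) + 1) * (1 / ((d : ℝ) - 1)) ≤ 3 := by
  have hd' : (2 : ℝ) ≤ d := by exact_mod_cast hd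
  have hlow : (d : ℝ) ≤ m + 1 := by exact_mod_cast (by lia : d ≤ m + 1)
  have hhigh : (m : ℝ) + 1 ≤ d + 1 := by exact_mod_cast (by lia : m + 1 ≤ d + 1)
  have hpos : (0 : ℝ) < d - 1 := by linarith
  rw [mul_one_div, mul_one_div, one_le_div hpos, div_le_iff₀ hpos]
  constructor <;> linarith

/-- Fix `d ≥ 2` and `k = m+1 ∈ {d, d+1}`. If `X` is a
`Dir_k(1/(d-1))`-distributed random vector (encoded by the density of its
first `m = k-1` coordinates, the last being `1` minus their sum) and
`V = max_i X_i`, then `E[(1-V)^{-1/2}] ≤ 7√2`. -/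
theorem stmt13 (d m : ℕ) (hd : 2 ≤ d) (hk : m + 1 = d ∨ m + 1 = d + 1)
    (Ω : Type) [MeasureSpace Ω] [IsProbabilityMeasure (ℙ : Measure Ω)]
    (X : Ω → Fin (m + 1) → ℝ) (hmeas : Measurable X)
    (hlaw : (ℙ : Measure Ω).map X =
      (dirichletCoordLaw m (1 / ((d : ℝ) - 1))).map
        (fun y : Fin m → ℝ => Fin.snoc y (1 - ∑ i, y i))) :
    ∫ ω, (1 - iSup (X ω)) ^ (-(1 / 2 : ℝ)) ∂(ℙ : Measure Ω) ≤ 7 * Real.sqrt 2 := by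
  obtain ⟨hlow, hhigh⟩ := dirichlet_param_bounds hd hk
  refine (stmt13_general (by norm_num) (by norm_num) hlow hlaw).2.trans ?_
  rw [← Real.sqrt_eq_rpow, mul_comm, show (1 - 1 / 2 : ℝ) = 2⁻¹ by norm_num, div_inv_eq_mul]
  gcongr
  linarith
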